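/- Let L̂ : L_p(μ) → ℂ be a continuous m-homogeneous polynomial, m ≥ 2, on a complex L_p(μ) space with m ≤ p ≤ ∞, and let p′ = p/(p−1). Then for every k ≤ m and every x ∈ L_p(μ) with ‖x‖_p < 1, ‖D̂^k L̂(x)‖ ≤ k! · (1−‖x‖_p^{p′})^{−k/p′} · ‖L̂‖. -/

import Mathlib

/-!
If `‖x‖ ^ p' + ‖v‖ ^ p' ≤ 1`, Clarkson's inequality
`‖x + v‖ ^ p + ‖x - v‖ ^ p ≤ 2 * (‖x‖ ^ p' + ‖v‖ ^ p') ^ (p - 1)` bounds the mean of `‖x ± v‖ ^ m`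
by `1` for every `m ≤ p`, hence the mean of `‖F (x ± v)‖` by `‖F‖` for every `m`-homogeneous
polynomial `F`. Apply this to `v = t • y` with `‖y‖ ≤ 1` and `|t| ^ p' = 1 - ‖x‖ ^ p'`. The `k`-th
derivative of `t ↦ F (x + t • y)` at `0` only sees the part of this function that has the parity of
`k`, and that part is bounded by `‖F‖` on the circle, so Cauchy's estimate gives the claim.

Clarkson's inequality itself is obtained by complex interpolation for the matrix with rows `(1, 1)`
and `(1, -1)`, between the trivial `ℓ¹ → ℓ^∞` bound and the parallelogram law.
-/

open Metric MeasureTheory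
open scoped ENNReal

/-- The conjugate exponent `p' = p/(p-1)` of an extended-real exponent `p`
(with `p' = 1` for `p = ∞`), as a real number. -/
noncomputable def conjExp (p : ℝ≥0∞) : ℝ :=
  if p = ∞ then 1 else p.toReal / (p.toReal - 1)

section Interpolation

variable {E : Type*} [NormedAddCommGroup E] [NormedSpace ℂ E]

/-- The analytic family of complex interpolation passing through `v` at `z = 1 / q`: the direction
of `v` is kept and its length becomes `(‖v‖ ^ q) ^ z`. -/
noncomputable def interpolant (q : ℝ) (v : E) (z : ℂ) : E :=
  ((‖v‖ ^ q : ℝ) : ℂ) ^ z • (‖v‖ : ℂ)⁻¹ • v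

lemma norm_interpolant_le (q : ℝ) (v : E) {z : ℂ} (hz : 0 < z.re) :
    ‖interpolant q v z‖ ≤ (‖v‖ ^ q) ^ z.re := by
  rw [interpolant, norm_smul, Complex.norm_cpow_eq_rpow_re_of_nonneg (by positivity) hz.ne',
    norm_smul, norm_inv, Complex.norm_real, norm_norm]
  exact mul_le_of_le_one_right (by positivity) (inv_mul_le_one_of_le₀ le_rfl (norm_nonneg v))

lemma interpolant_inv {q : ℝ} (hq : q ≠ 0) (v : E) : interpolant q v (q⁻¹ : ℝ) = v := by
  rcases eq_or_ne v 0 with rfl | hv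
  · simp [interpolant]
  · rw [interpolant, ← Complex.ofReal_cpow (by positivity), Real.rpow_rpow_inv (norm_nonneg v) hq,
      smul_inv_smul₀ (by simpa using hv)]

lemma differentiableAt_interpolant (q : ℝ) (v : E) {z : ℂ} (hz : z ≠ 0) :
    DifferentiableAt ℂ (interpolant q v) z :=
  (differentiableAt_id.const_cpow (Or.inr hz)).smul_const _

variable {ι κ : Type*} [Fintype ι] [Fintype κ] {c : ι → κ → ℂ} {N : ℝ}

lemma norm_sum_dual_apply_le (φ : ι → StrongDual ℂ E) (w : ι → E) :
    ‖∑ i, φ i (w i)‖ ≤ ∑ i, ‖φ i‖ * ‖w i‖ :=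
  norm_sum_le_of_le _ fun i _ => (φ i).le_opNorm (w i)

lemma norm_sum_dual_apply_le_one_norm (hc : ∀ i j, ‖c i j‖ ≤ 1) (φ : ι → StrongDual ℂ E)
    (y : κ → E) :
    ‖∑ i, φ i (∑ j, c i j • y j)‖ ≤ (∑ i, ‖φ i‖) * ∑ j, ‖y j‖ := by
  refine (norm_sum_dual_apply_le _ _).trans ?_
  rw [Finset.sum_mul]
  gcongr with i
  refine norm_sum_le_of_le _ fun j _ => ?_
  exact (norm_smul_le _ _).trans (mul_le_of_le_one_left (norm_nonneg _) (hc i j))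

lemma norm_sum_dual_apply_le_two_norm
    (hN : ∀ y : κ → E, ∑ i, ‖∑ j, c i j • y j‖ ^ 2 ≤ N * ∑ j, ‖y j‖ ^ 2)
    (φ : ι → StrongDual ℂ E) (y : κ → E) :
    ‖∑ i, φ i (∑ j, c i j • y j)‖ ≤ √(∑ i, ‖φ i‖ ^ 2) * √(N * ∑ j, ‖y j‖ ^ 2) := by
  calc ‖∑ i, φ i (∑ j, c i j • y j)‖
      ≤ ∑ i, ‖φ i‖ * ‖∑ j, c i j • y j‖ := norm_sum_dual_apply_le _ _
    _ ≤ √(∑ i, ‖φ i‖ ^ 2) * √(∑ i, ‖∑ j, c i j • y j‖ ^ 2) := Real.sum_mul_le_sqrt_mul_sqrt _ _ _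
    _ ≤ √(∑ i, ‖φ i‖ ^ 2) * √(N * ∑ j, ‖y j‖ ^ 2) := by gcongr; exact hN y

lemma rpow_le_one_add {t r : ℝ} (ht : 0 ≤ t) (hr₀ : 0 ≤ r) (hr₁ : r ≤ 1) : t ^ r ≤ 1 + t :=
  calc t ^ r ≤ (1 + t) ^ r := by gcongr; linarith
    _ ≤ 1 + t := Real.rpow_le_self_of_one_le (by linarith) hr₁

/-- The scalar function to which the three lines theorem is applied: the pairing of the matrix `c`
with the families `φ` and `y`, all vectors being moved along their `interpolant`s. -/
noncomputable def interpolatedPairing (q : ℝ) (c : ι → κ → ℂ) (φ : ι → StrongDual ℂ E) (y : κ → E)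
    (z : ℂ) : ℂ :=
  ∑ i, interpolant q (φ i) z (∑ j, c i j • interpolant q (y j) z)

lemma interpolatedPairing_inv {q : ℝ} (hq : q ≠ 0) (φ : ι → StrongDual ℂ E) (y : κ → E) :
    interpolatedPairing q c φ y (q⁻¹ : ℝ) = ∑ i, φ i (∑ j, c i j • y j) := by
  simp only [interpolatedPairing, interpolant_inv hq]

lemma diffContOnCl_interpolatedPairing (q : ℝ) (φ : ι → StrongDual ℂ E) (y : κ → E) :
    DiffContOnCl ℂ (interpolatedPairing q c φ y)
      (Complex.HadamardThreeLines.verticalStrip (1 / 2) 1) := by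
  refine DifferentiableOn.diffContOnCl fun z hz => DifferentiableAt.differentiableWithinAt ?_
  have hre : 1 / 2 ≤ z.re :=
    closure_minimal (fun _ hw => hw.1.le)
      (isClosed_Ici.preimage Complex.continuous_re : IsClosed (Complex.re ⁻¹' Set.Ici (1 / 2))) hz
  have hz₀ : z ≠ 0 := by
    rintro rfl
    norm_num at hre
  have hv (v : E) := differentiableAt_interpolant q v hz₀
  have hφ (ψ : StrongDual ℂ E) := differentiableAt_interpolant q ψ hz₀
  unfold interpolatedPairing
  fun_prop

lemma norm_interpolatedPairing_le_one_norm (hc : ∀ i j, ‖c i j‖ ≤ 1) (q : ℝ)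
    (φ : ι → StrongDual ℂ E) (y : κ → E) {z : ℂ} (hz : 0 < z.re) :
    ‖interpolatedPairing q c φ y z‖ ≤
      (∑ i, (‖φ i‖ ^ q) ^ z.re) * ∑ j, (‖y j‖ ^ q) ^ z.re := by
  refine (norm_sum_dual_apply_le_one_norm hc _ _).trans ?_
  gcongr <;> exact norm_interpolant_le q _ hz

lemma bddAbove_norm_interpolatedPairing (hc : ∀ i j, ‖c i j‖ ≤ 1) (q : ℝ)
    (φ : ι → StrongDual ℂ E) (y : κ → E) :
    BddAbove ((norm ∘ interpolatedPairing q c φ y) ''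
      Complex.HadamardThreeLines.verticalClosedStrip (1 / 2) 1) := by
  refine ⟨(∑ i, (1 + ‖φ i‖ ^ q)) * ∑ j, (1 + ‖y j‖ ^ q), ?_⟩
  rintro _ ⟨z, ⟨hz₁, hz₂⟩, rfl⟩
  have hz₀ : 0 < z.re := by linarith
  refine (norm_interpolatedPairing_le_one_norm hc q φ y hz₀).trans ?_
  gcongr <;> exact rpow_le_one_add (by positivity) hz₀.le hz₂

lemma norm_interpolatedPairing_le_two_norm (hN₀ : 0 ≤ N)
    (hN : ∀ y : κ → E, ∑ i, ‖∑ j, c i j • y j‖ ^ 2 ≤ N * ∑ j, ‖y j‖ ^ 2) (q : ℝ)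
    (φ : ι → StrongDual ℂ E) (y : κ → E) {z : ℂ} (hz : z.re = 1 / 2) :
    ‖interpolatedPairing q c φ y z‖ ≤
      (N * ((∑ i, ‖φ i‖ ^ q) * ∑ j, ‖y j‖ ^ q)) ^ (1 / 2 : ℝ) := by
  have hsq {F : Type _} [NormedAddCommGroup F] [NormedSpace ℂ F] (v : F) :
      ‖interpolant q v z‖ ^ 2 ≤ ‖v‖ ^ q := by
    have h := norm_interpolant_le q v (z := z) (by rw [hz]; norm_num)
    rw [hz, ← Real.sqrt_eq_rpow] at h
    exact (Real.le_sqrt (norm_nonneg _) (by positivity)).1 h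
  calc ‖interpolatedPairing q c φ y z‖
      ≤ √(∑ i, ‖interpolant q (φ i) z‖ ^ 2) * √(N * ∑ j, ‖interpolant q (y j) z‖ ^ 2) :=
        norm_sum_dual_apply_le_two_norm hN _ _
    _ ≤ √(∑ i, ‖φ i‖ ^ q) * √(N * ∑ j, ‖y j‖ ^ q) := by gcongr <;> exact hsq _
    _ = (N * ((∑ i, ‖φ i‖ ^ q) * ∑ j, ‖y j‖ ^ q)) ^ (1 / 2 : ℝ) := by
        rw [← Real.sqrt_mul (by positivity), Real.sqrt_eq_rpow, mul_left_comm]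

lemma norm_sum_dual_apply_le_rpow {q : ℝ} (hq₁ : 1 ≤ q) (hq₂ : q ≤ 2) (hc : ∀ i j, ‖c i j‖ ≤ 1)
    (hN₀ : 0 ≤ N) (hN : ∀ y : κ → E, ∑ i, ‖∑ j, c i j • y j‖ ^ 2 ≤ N * ∑ j, ‖y j‖ ^ 2)
    (φ : ι → StrongDual ℂ E) (y : κ → E) :
    ‖∑ i, φ i (∑ j, c i j • y j)‖ ≤
      N ^ (1 - q⁻¹) * ((∑ i, ‖φ i‖ ^ q) * ∑ j, ‖y j‖ ^ q) ^ q⁻¹ := by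
  set T := (∑ i, ‖φ i‖ ^ q) * ∑ j, ‖y j‖ ^ q
  have hT₀ : 0 ≤ T := by positivity
  have hs₁ : 1 / 2 ≤ q⁻¹ := by rw [one_div]; gcongr
  have hs₂ : q⁻¹ ≤ 1 := inv_le_one_of_one_le₀ hq₁
  have hweight : (q⁻¹ - 1 / 2) / (1 - 1 / 2) = 2 * q⁻¹ - 1 := by ring
  have hinterp := Complex.HadamardThreeLines.norm_le_interp_of_mem_verticalClosedStrip'
    (z := (q⁻¹ : ℝ)) (a := (N * T) ^ (1 / 2 : ℝ)) (b := T) (by norm_num)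
    ⟨by simpa using hs₁, by simpa using hs₂⟩ (diffContOnCl_interpolatedPairing q φ y)
    (bddAbove_norm_interpolatedPairing hc q φ y)
    (fun z hz => norm_interpolatedPairing_le_two_norm hN₀ hN q φ y hz)
    (fun z (hz : z.re = 1) => by
      simpa only [hz, Real.rpow_one] using
        norm_interpolatedPairing_le_one_norm hc q φ y (z := z) (by rw [hz]; norm_num))
  rw [interpolatedPairing_inv (by linarith), Complex.ofReal_re, ← Real.rpow_mul (by positivity),
    hweight, Real.mul_rpow hN₀ hT₀, mul_assoc,
    ← Real.rpow_add_of_nonneg hT₀ (by linarith) (by linarith)] at hinterp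
  convert hinterp using 3 <;> ring

lemma exists_dual_sum_apply_eq_sum_norm_rpow {p q : ℝ} (hpq : p.HolderConjugate q) (w : ι → E) :
    ∃ φ : ι → StrongDual ℂ E, ∑ i, φ i (w i) = ((∑ i, ‖w i‖ ^ p : ℝ) : ℂ) ∧
      ∑ i, ‖φ i‖ ^ q ≤ ∑ i, ‖w i‖ ^ p := by
  have hnorming (i : ι) : ∃ γ : StrongDual ℂ E, ‖γ‖ ≤ 1 ∧ γ (w i) = (‖w i‖ : ℂ) :=
    exists_dual_vector'' ℂ (w i)
  choose γ hγ hγw using hnorming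
  refine ⟨fun i => ((‖w i‖ ^ (p - 1) : ℝ) : ℂ) • γ i, ?_, ?_⟩
  · push_cast
    refine Finset.sum_congr rfl fun i _ => ?_
    rw [Pi.smul_apply, hγw, smul_eq_mul]
    norm_cast
    rw [← Real.rpow_add_one' (norm_nonneg _) (by linarith [hpq.pos]), sub_add_cancel]
  · gcongr with i
    have hnorm : ‖((‖w i‖ ^ (p - 1) : ℝ) : ℂ) • γ i‖ ≤ ‖w i‖ ^ (p - 1) := by
      rw [norm_smul, Complex.norm_real, Real.norm_of_nonneg (by positivity)]
      exact mul_le_of_le_one_right (by positivity) (hγ i)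
    refine (Real.rpow_le_rpow (norm_nonneg _) hnorm hpq.symm.nonneg).trans_eq ?_
    rw [← Real.rpow_mul (norm_nonneg _), hpq.sub_one_mul_conj]

theorem sum_norm_sum_smul_rpow_le {p q : ℝ} (hpq : p.HolderConjugate q) (hp : 2 ≤ p)
    (hc : ∀ i j, ‖c i j‖ ≤ 1) (hN₀ : 0 ≤ N)
    (hN : ∀ y : κ → E, ∑ i, ‖∑ j, c i j • y j‖ ^ 2 ≤ N * ∑ j, ‖y j‖ ^ 2) (y : κ → E) :
    ∑ i, ‖∑ j, c i j • y j‖ ^ p ≤ N * (∑ j, ‖y j‖ ^ q) ^ (p - 1) := by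
  have hp₀ := hpq.pos
  set S := ∑ i, ‖∑ j, c i j • y j‖ ^ p
  set Y := ∑ j, ‖y j‖ ^ q
  have hS₀ : 0 ≤ S := by positivity
  have hY₀ : 0 ≤ Y := by positivity
  obtain ⟨φ, hφS, hφ⟩ := exists_dual_sum_apply_eq_sum_norm_rpow hpq fun i => ∑ j, c i j • y j
  have hq₂ : q ≤ 2 := by
    have := hpq.mul_eq_add
    nlinarith [hpq.symm.lt]
  have hdual : S ≤ N ^ p⁻¹ * (S * Y) ^ q⁻¹ := by
    have h := norm_sum_dual_apply_le_rpow hpq.symm.lt.le hq₂ hc hN₀ hN φ y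
    rw [hφS, Complex.norm_real, Real.norm_of_nonneg hS₀, hpq.symm.one_sub_inv] at h
    refine h.trans ?_
    have := hpq.symm.inv_nonneg
    gcongr
  have hpow : S ^ p ≤ N * (S * Y) ^ (p - 1) :=
    calc S ^ p ≤ (N ^ p⁻¹ * (S * Y) ^ q⁻¹) ^ p := by gcongr
      _ = N * (S * Y) ^ (p - 1) := by
        rw [Real.mul_rpow (by positivity) (by positivity), Real.rpow_inv_rpow hN₀ hp₀.ne',
          ← Real.rpow_mul (by positivity), ← hpq.div_conj_eq_sub_one, inv_mul_eq_div]
  rcases hS₀.eq_or_lt with hS | hS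
  · rw [← hS]; positivity
  · rw [Real.mul_rpow hS₀ hY₀, mul_left_comm, Real.rpow_sub_one hS.ne', div_mul_eq_mul_div,
      le_div_iff₀ hS, mul_le_mul_iff_right₀ (by positivity)] at hpow
    exact hpow

end Interpolation

section Clarkson

/-- Clarkson's inequality for the norm of `E`, in the form pairing the exponent `p ≥ 2` on
the left with its conjugate exponent `q` on the right. -/
def ClarksonInequality (E : Type*) [NormedAddCommGroup E] (p q : ℝ) : Prop :=
  ∀ a b : E, ‖a + b‖ ^ p + ‖a - b‖ ^ p ≤ 2 * (‖a‖ ^ q + ‖b‖ ^ q) ^ (p - 1)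

theorem clarksonInequality_of_innerProductSpace {H : Type*} [NormedAddCommGroup H]
    [InnerProductSpace ℂ H] {p q : ℝ} (hpq : p.HolderConjugate q) (hp : 2 ≤ p) :
    ClarksonInequality H p q := by
  intro a b
  have hparallelogram (y : Fin 2 → H) :
      ∑ i, ‖∑ j, !![(1 : ℂ), 1; 1, -1] i j • y j‖ ^ 2 ≤ 2 * ∑ j, ‖y j‖ ^ 2 := by
    have h := parallelogram_law_with_norm ℂ (y 0) (y 1)
    simp only [Matrix.of_apply, Matrix.cons_val', Matrix.cons_val_fin_one, Fin.sum_univ_two,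
      Matrix.cons_val_zero, Matrix.cons_val_one, one_smul, neg_smul, ← sub_eq_add_neg]
    linarith
  have hentries : ∀ i j, ‖!![(1 : ℂ), 1; 1, -1] i j‖ ≤ 1 := by
    simp [Fin.forall_fin_two]
  simpa [Fin.sum_univ_two, ← sub_eq_add_neg] using
    sum_norm_sum_smul_rpow_le hpq hp hentries zero_le_two hparallelogram ![a, b]

lemma clarksonInequality_iff_enorm {E : Type*} [NormedAddCommGroup E] {p q : ℝ}
    (hpq : p.HolderConjugate q) :
    ClarksonInequality E p q ↔
      ∀ a b : E, ‖a + b‖ₑ ^ p + ‖a - b‖ₑ ^ p ≤ 2 * (‖a‖ₑ ^ q + ‖b‖ₑ ^ q) ^ (p - 1) := by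
  simp only [ClarksonInequality, enorm_eq_nnnorm, ← ENNReal.coe_rpow_of_nonneg _ hpq.nonneg,
    ← ENNReal.coe_rpow_of_nonneg _ hpq.symm.nonneg, ← ENNReal.coe_add,
    ← ENNReal.coe_rpow_of_nonneg _ hpq.sub_one_pos.le]
  norm_cast

variable {α E : Type*} [MeasurableSpace α] {μ : Measure α} [NormedAddCommGroup E]

lemma Lp_lintegral_enorm_rpow {p : ℝ≥0∞} (hp₀ : p ≠ 0) (hp : p ≠ ∞) (w : Lp E p μ) :
    ∫⁻ t, ‖w t‖ₑ ^ p.toReal ∂μ = ‖w‖ₑ ^ p.toReal := by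
  rw [Lp.enorm_def, eLpNorm_eq_eLpNorm' hp₀ hp,
    lintegral_rpow_enorm_eq_rpow_eLpNorm' (ENNReal.toReal_pos hp₀ hp)]

lemma Lp_lintegral_enorm_rpow_add_rpow_le {p : ℝ≥0∞} (hp : p ≠ ∞) {q : ℝ}
    (hpq : p.toReal.HolderConjugate q) (hp₂ : 2 ≤ p.toReal) (u v : Lp E p μ) :
    ∫⁻ t, (‖u t‖ₑ ^ q + ‖v t‖ₑ ^ q) ^ (p.toReal - 1) ∂μ ≤
      (‖u‖ₑ ^ q + ‖v‖ₑ ^ q) ^ (p.toReal - 1) := by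
  have hr := hpq.sub_one_pos
  have hp₀ : p ≠ 0 := (ENNReal.toReal_pos_iff.1 hpq.pos).1.ne'
  have hmeas (w : Lp E p μ) : AEMeasurable (fun t => ‖w t‖ₑ ^ q) μ :=
    (Lp.aestronglyMeasurable w).enorm.pow_const q
  have hnorm (w : Lp E p μ) :
      (∫⁻ t, (‖w t‖ₑ ^ q) ^ (p.toReal - 1) ∂μ) ^ (1 / (p.toReal - 1)) = ‖w‖ₑ ^ q := by
    simp only [← ENNReal.rpow_mul, mul_comm q, hpq.sub_one_mul_conj,
      Lp_lintegral_enorm_rpow hp₀ hp]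
    rw [mul_one_div, ← hpq.conjugate_eq]
  have hminkowski := ENNReal.lintegral_Lp_add_le (hmeas u) (hmeas v) (p := p.toReal - 1)
    (by linarith)
  rwa [hnorm, hnorm, one_div, ENNReal.rpow_inv_le_iff hr] at hminkowski

theorem ClarksonInequality.lp {p : ℝ≥0∞} (hp : p ≠ ∞) {q : ℝ}
    (hpq : p.toReal.HolderConjugate q) (hp₂ : 2 ≤ p.toReal) [Fact (1 ≤ p)]
    (hE : ClarksonInequality E p.toReal q) : ClarksonInequality (Lp E p μ) p.toReal q := by
  have hp₀ : p ≠ 0 := (ENNReal.toReal_pos_iff.1 hpq.pos).1.ne'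
  rw [clarksonInequality_iff_enorm hpq] at hE ⊢
  intro u v
  calc ‖u + v‖ₑ ^ p.toReal + ‖u - v‖ₑ ^ p.toReal
      = ∫⁻ t, (‖(u + v) t‖ₑ ^ p.toReal + ‖(u - v) t‖ₑ ^ p.toReal) ∂μ := by
        rw [lintegral_add_left' ((Lp.aestronglyMeasurable _).enorm.pow_const _),
          Lp_lintegral_enorm_rpow hp₀ hp, Lp_lintegral_enorm_rpow hp₀ hp]
    _ ≤ ∫⁻ t, 2 * (‖u t‖ₑ ^ q + ‖v t‖ₑ ^ q) ^ (p.toReal - 1) ∂μ := by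
        refine lintegral_mono_ae ?_
        filter_upwards [Lp.coeFn_add u v, Lp.coeFn_sub u v] with t hadd hsub
        rw [hadd, hsub]
        exact hE _ _
    _ = 2 * ∫⁻ t, (‖u t‖ₑ ^ q + ‖v t‖ₑ ^ q) ^ (p.toReal - 1) ∂μ :=
        lintegral_const_mul' _ _ ENNReal.ofNat_ne_top
    _ ≤ 2 * (‖u‖ₑ ^ q + ‖v‖ₑ ^ q) ^ (p.toReal - 1) := by
        gcongr
        exact Lp_lintegral_enorm_rpow_add_rpow_le hp hpq hp₂ u v

end Clarkson

section ConjExp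

lemma conjExp_top : conjExp ∞ = 1 := if_pos rfl

lemma holderConjugate_conjExp {p : ℝ≥0∞} (hp : p ≠ ∞) (hp₁ : 1 < p) :
    p.toReal.HolderConjugate (conjExp p) := by
  rw [conjExp, if_neg hp]
  exact Real.HolderConjugate.conjExponent ((ENNReal.toReal_lt_toReal ENNReal.one_ne_top hp).2 hp₁)

lemma one_le_conjExp {p : ℝ≥0∞} (hp₁ : 1 < p) : 1 ≤ conjExp p := by
  rcases eq_or_ne p ∞ with rfl | hp
  · exact conjExp_top.ge
  · exact (holderConjugate_conjExp hp hp₁).symm.lt.le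

end ConjExp

lemma rpow_le_one_add_mul_rpow_sub_one {a r p : ℝ} (ha : 0 ≤ a) (hp : 0 < p) (hr : 0 ≤ r)
    (hrp : r ≤ p) : a ^ r ≤ 1 + r / p * (a ^ p - 1) := by
  have hbernoulli := rpow_one_add_le_one_add_mul_self (s := a ^ p - 1)
    (by linarith [Real.rpow_nonneg ha p]) (div_nonneg hr hp.le) ((div_le_one hp).2 hrp)
  rwa [add_sub_cancel, ← Real.rpow_mul ha, mul_div_cancel₀ _ hp.ne'] at hbernoulli

lemma rpow_add_rpow_le_two_of_le {a b r p : ℝ} (ha : 0 ≤ a) (hb : 0 ≤ b) (hp : 0 < p)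
    (hr : 0 ≤ r) (hrp : r ≤ p) (h : a ^ p + b ^ p ≤ 2) : a ^ r + b ^ r ≤ 2 :=
  calc a ^ r + b ^ r ≤ (1 + r / p * (a ^ p - 1)) + (1 + r / p * (b ^ p - 1)) :=
        add_le_add (rpow_le_one_add_mul_rpow_sub_one ha hp hr hrp)
          (rpow_le_one_add_mul_rpow_sub_one hb hp hr hrp)
    _ = 2 + r / p * (a ^ p + b ^ p - 2) := by ring
    _ ≤ 2 := by linarith [mul_nonneg (div_nonneg hr hp.le) (sub_nonneg.2 h)]

theorem Lp_norm_add_pow_add_norm_sub_pow_le_two {α H : Type*} [MeasurableSpace α] {μ : Measure α}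
    [NormedAddCommGroup H] [InnerProductSpace ℂ H] {p : ℝ≥0∞} [Fact (1 ≤ p)] (hp₂ : 2 ≤ p)
    {m : ℕ} (hmp : (m : ℝ≥0∞) ≤ p) {u v : Lp H p μ}
    (huv : ‖u‖ ^ conjExp p + ‖v‖ ^ conjExp p ≤ 1) : ‖u + v‖ ^ m + ‖u - v‖ ^ m ≤ 2 := by
  rcases eq_or_ne p ∞ with rfl | hp
  · rw [conjExp_top, Real.rpow_one, Real.rpow_one] at huv
    have hadd : ‖u + v‖ ^ m ≤ 1 := pow_le_one₀ (norm_nonneg _) ((norm_add_le u v).trans huv)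
    have hsub : ‖u - v‖ ^ m ≤ 1 := pow_le_one₀ (norm_nonneg _) ((norm_sub_le u v).trans huv)
    linarith
  · have hpq := holderConjugate_conjExp hp (ENNReal.one_lt_two.trans_le hp₂)
    have hp₂' : 2 ≤ p.toReal := by simpa using ENNReal.toReal_mono hp hp₂
    have hmp' : (m : ℝ) ≤ p.toReal := by simpa using ENNReal.toReal_mono hp hmp
    have hclarkson :=
      (clarksonInequality_of_innerProductSpace (H := H) hpq hp₂').lp hp hpq hp₂' u v
    have hone : (‖u‖ ^ conjExp p + ‖v‖ ^ conjExp p) ^ (p.toReal - 1) ≤ 1 :=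
      Real.rpow_le_one (by positivity) huv hpq.sub_one_pos.le
    exact_mod_cast rpow_add_rpow_le_two_of_le (norm_nonneg (u + v)) (norm_nonneg (u - v)) hpq.pos
      m.cast_nonneg hmp' (by linarith)

section CauchyEstimate

theorem norm_iteratedDeriv_le_of_norm_add_norm_neg_le {E : Type*} [NormedAddCommGroup E]
    [NormedSpace ℂ E] [CompleteSpace E] {φ : ℂ → E} (k : ℕ) {R M : ℝ} (hR : 0 < R)
    (hφ : DiffContOnCl ℂ φ (ball 0 R))
    (hM : ∀ t ∈ sphere (0 : ℂ) R, ‖φ t‖ + ‖φ (-t)‖ ≤ 2 * M) :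
    ‖iteratedDeriv k φ 0‖ ≤ k.factorial * M / R ^ k := by
  -- Averaging `φ` with `χ` does not change the `k`-th derivative at the origin.
  let χ : ℂ → E := (-1 : ℂ) ^ k • fun t => φ (-t)
  have hχ : DiffContOnCl ℂ χ (ball 0 R) :=
    (hφ.comp differentiable_neg.diffContOnCl fun t ht => by simpa using ht).const_smul _
  have hcont {ψ : ℂ → E} (hψ : DiffContOnCl ℂ ψ (ball 0 R)) : ContDiffAt ℂ k ψ 0 :=
    (hψ.differentiableOn.analyticAt (ball_mem_nhds 0 hR)).contDiffAt
  have hχ_deriv : iteratedDeriv k χ 0 = iteratedDeriv k φ 0 := by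
    rw [iteratedDeriv_const_smul_field, iteratedDeriv_comp_neg, neg_zero, smul_smul, ← mul_pow,
      neg_one_mul, neg_neg, one_pow, one_smul]
  have hderiv : iteratedDeriv k ((1 / 2 : ℂ) • (φ + χ)) 0 = iteratedDeriv k φ 0 := by
    rw [iteratedDeriv_const_smul_field, iteratedDeriv_add (hcont hφ) (hcont hχ), hχ_deriv,
      ← two_smul ℂ, smul_smul, one_div, inv_mul_cancel₀ two_ne_zero, one_smul]
  rw [← hderiv]
  refine Complex.norm_iteratedDeriv_le_of_forall_mem_sphere_norm_le k hR
    ((hφ.add hχ).const_smul _) fun t ht => ?_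
  calc ‖(1 / 2 : ℂ) • (φ t + χ t)‖
      ≤ 1 / 2 * (‖φ t‖ + ‖χ t‖) := by
        rw [norm_smul, norm_div, norm_one, Complex.norm_ofNat]
        gcongr
        exact norm_add_le _ _
    _ = 1 / 2 * (‖φ t‖ + ‖φ (-t)‖) := by simp [χ, norm_smul]
    _ ≤ M := by linarith [hM t ht]

lemma iteratedFDeriv_apply_const_eq_iteratedDeriv {𝕜 X E : Type*} [NontriviallyNormedField 𝕜]
    [NormedAddCommGroup X] [NormedSpace 𝕜 X] [NormedAddCommGroup E] [NormedSpace 𝕜 E] {F : X → E}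
    {k : ℕ} (hF : ContDiff 𝕜 k F) (x y : X) :
    iteratedFDeriv 𝕜 k F x (fun _ => y) = iteratedDeriv k (fun t : 𝕜 => F (x + t • y)) 0 := by
  have hcomp : (fun t : 𝕜 => F (x + t • y)) =
      (fun z => F (x + z)) ∘ ContinuousLinearMap.toSpanSingleton 𝕜 y := rfl
  have htranslate : ContDiff 𝕜 k fun z => F (x + z) := hF.comp (contDiff_const.add contDiff_id)
  rw [iteratedDeriv_eq_iteratedFDeriv, hcomp,
    ContinuousLinearMap.iteratedFDeriv_comp_right _ htranslate _ le_rfl,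
    iteratedFDeriv_comp_add_left]
  simp

end CauchyEstimate

section HomogeneousPolynomial

/-- The norm `sup_{‖y‖ ≤ 1} ‖F y‖` of a homogeneous polynomial `F`. It has the junk value `0` if
`F` is unbounded on the unit ball. -/
noncomputable def unitBallNorm {X E : Type*} [SeminormedAddCommGroup X] [Norm E] (F : X → E) : ℝ :=
  sSup ((fun y => ‖F y‖) '' closedBall 0 1)

lemma unitBallNorm_le {X E : Type*} [SeminormedAddCommGroup X] [Norm E] {F : X → E} {C : ℝ}
    (h : ∀ y, ‖y‖ ≤ 1 → ‖F y‖ ≤ C) : unitBallNorm F ≤ C :=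
  csSup_le ((nonempty_closedBall.2 zero_le_one).image _)
    (Set.forall_mem_image.2 fun y hy => h y (mem_closedBall_zero_iff.1 hy))

variable {𝕜 X E : Type*} [RCLike 𝕜] [NormedAddCommGroup X] [NormedSpace 𝕜 X] [NormedAddCommGroup E]
  [NormedSpace 𝕜 E] {m : ℕ} (L : ContinuousMultilinearMap 𝕜 (fun _ : Fin m => X) E)

lemma norm_apply_diag_le_unitBallNorm {y : X} (hy : ‖y‖ ≤ 1) :
    ‖L fun _ => y‖ ≤ unitBallNorm fun u => L fun _ => u := by
  refine le_csSup ⟨‖L‖, Set.forall_mem_image.2 fun u hu => ?_⟩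
    ⟨y, mem_closedBall_zero_iff.2 hy, rfl⟩
  exact L.unit_le_opNorm <|
    (pi_norm_le_iff_of_nonneg zero_le_one).2 fun _ => mem_closedBall_zero_iff.1 hu

lemma norm_apply_diag_le_unitBallNorm_mul_pow (y : X) :
    ‖L fun _ => y‖ ≤ (unitBallNorm fun u => L fun _ => u) * ‖y‖ ^ m := by
  rcases eq_or_ne y 0 with rfl | hy
  · rcases m.eq_zero_or_pos with rfl | hm
    · simpa using norm_apply_diag_le_unitBallNorm L (y := 0) (by simp)
    · rw [L.map_coord_zero ⟨0, hm⟩ rfl]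
      simp [hm.ne']
  · have hy₀ : 0 < ‖y‖ := norm_pos_iff.2 hy
    have hunit := norm_apply_diag_le_unitBallNorm L (norm_smul_inv_norm (𝕜 := 𝕜) hy).le
    rw [L.map_smul_univ (fun _ => (‖y‖ : 𝕜)⁻¹) (fun _ => y)] at hunit
    simpa [norm_smul, inv_mul_le_iff₀ (pow_pos hy₀ m), mul_comm] using hunit

lemma contDiff_apply_diag (n : WithTop ℕ∞) : ContDiff 𝕜 n fun u => L fun _ => u :=
  L.contDiff.comp (contDiff_pi.2 fun _ => contDiff_id)

end HomogeneousPolynomial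

section Bernstein

variable {X E : Type*} [NormedAddCommGroup X] [NormedSpace ℂ X] [NormedAddCommGroup E]
  [NormedSpace ℂ E] [CompleteSpace E] {m : ℕ}

theorem norm_iteratedFDeriv_apply_diag_le
    (L : ContinuousMultilinearMap ℂ (fun _ : Fin m => X) E) (k : ℕ) {x y : X} {R : ℝ} (hR : 0 < R)
    (hxy : ∀ t : ℂ, ‖t‖ = R → ‖x + t • y‖ ^ m + ‖x - t • y‖ ^ m ≤ 2) :
    ‖iteratedFDeriv ℂ k (fun u => L fun _ => u) x fun _ => y‖ ≤
      k.factorial * (unitBallNorm fun u => L fun _ => u) / R ^ k := by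
  have hL := contDiff_apply_diag L
  rw [iteratedFDeriv_apply_const_eq_iteratedDeriv (hL k)]
  have hline : ContDiff ℂ 1 fun t : ℂ => x + t • y := by fun_prop
  refine norm_iteratedDeriv_le_of_norm_add_norm_neg_le k hR
    (((hL 1).comp hline).differentiable one_ne_zero).diffContOnCl fun t ht => ?_
  have hadd := norm_apply_diag_le_unitBallNorm_mul_pow L (x + t • y)
  have hsub := norm_apply_diag_le_unitBallNorm_mul_pow L (x - t • y)
  set M := unitBallNorm fun u => L fun _ => u
  have hM : 0 ≤ M := (norm_nonneg _).trans (norm_apply_diag_le_unitBallNorm L (y := 0) (by simp))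
  rw [neg_smul, ← sub_eq_add_neg]
  calc ‖L fun _ => x + t • y‖ + ‖L fun _ => x - t • y‖
      ≤ M * (‖x + t • y‖ ^ m + ‖x - t • y‖ ^ m) := by rw [mul_add]; exact add_le_add hadd hsub
    _ ≤ 2 * M := by
      rw [mul_comm]; gcongr; exact hxy t (mem_sphere_zero_iff_norm.1 ht)

theorem unitBallNorm_iteratedFDeriv_apply_diag_le {q : ℝ} (hq : 0 < q)
    (hpair : ∀ u v : X, ‖u‖ ^ q + ‖v‖ ^ q ≤ 1 → ‖u + v‖ ^ m + ‖u - v‖ ^ m ≤ 2)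
    (L : ContinuousMultilinearMap ℂ (fun _ : Fin m => X) E) (k : ℕ) {x : X} (hx : ‖x‖ < 1) :
    (unitBallNorm fun y => iteratedFDeriv ℂ k (fun u => L fun _ => u) x fun _ => y) ≤
      k.factorial * (1 - ‖x‖ ^ q) ^ (-(k : ℝ) / q) * unitBallNorm fun u => L fun _ => u := by
  have hgap : 0 < 1 - ‖x‖ ^ q := sub_pos.2 (Real.rpow_lt_one (norm_nonneg x) hx hq)
  set R := (1 - ‖x‖ ^ q) ^ q⁻¹ with hRdef
  have hR : 0 < R := Real.rpow_pos_of_pos hgap _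
  have hRq : R ^ q = 1 - ‖x‖ ^ q := Real.rpow_inv_rpow hgap.le hq.ne'
  have hRk : (1 - ‖x‖ ^ q) ^ (-(k : ℝ) / q) = (R ^ k)⁻¹ := by
    rw [hRdef, ← Real.rpow_mul_natCast hgap.le, ← Real.rpow_neg hgap.le, neg_div, inv_mul_eq_div]
  rw [hRk, mul_right_comm, ← div_eq_mul_inv]
  refine unitBallNorm_le fun y hy => norm_iteratedFDeriv_apply_diag_le L k hR fun t ht => ?_
  refine hpair x (t • y) ?_
  have hty : ‖t • y‖ ≤ R := by
    rw [norm_smul, ht]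
    exact mul_le_of_le_one_right hR.le hy
  calc ‖x‖ ^ q + ‖t • y‖ ^ q ≤ ‖x‖ ^ q + R ^ q := by gcongr
    _ = 1 := by rw [hRq, add_sub_cancel]

theorem bernstein_homogeneous_Lp_large_p_general
    {α H : Type*} [MeasurableSpace α] (μ : Measure α) [NormedAddCommGroup H]
    [InnerProductSpace ℂ H] {p : ℝ≥0∞} [Fact (1 ≤ p)] (hp₂ : 2 ≤ p) (hmp : (m : ℝ≥0∞) ≤ p)
    (L : ContinuousMultilinearMap ℂ (fun _ : Fin m => Lp H p μ) E) (k : ℕ)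
    {x : Lp H p μ} (hx : ‖x‖ < 1) :
    (unitBallNorm fun y => iteratedFDeriv ℂ k (fun u => L fun _ => u) x fun _ => y) ≤
      k.factorial * (1 - ‖x‖ ^ conjExp p) ^ (-(k : ℝ) / conjExp p) *
        unitBallNorm fun u => L fun _ => u :=
  unitBallNorm_iteratedFDeriv_apply_diag_le
    (one_pos.trans_le (one_le_conjExp (ENNReal.one_lt_two.trans_le hp₂)))
    (fun _ _ huv => Lp_norm_add_pow_add_norm_sub_pow_le_two hp₂ hmp huv) L k hx

end Bernstein

/-- Bernstein-type inequality for an `m`-homogeneous polynomial on a complex `L_p(μ)`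
space with `m ≤ p ≤ ∞`, where `p' = p/(p-1)`: for `k ≤ m` and `‖x‖_p < 1`,
`‖D̂^k L̂(x)‖ ≤ k! (1 - ‖x‖_p^{p'})^(-k/p') ‖L̂‖`. -/
theorem bernstein_homogeneous_Lp_large_p
    {α : Type*} [MeasurableSpace α] (μ : Measure α)
    (m k : ℕ) (hm : 2 ≤ m) (hk : k ≤ m) (p : ℝ≥0∞)
    (hmp : (m : ℝ≥0∞) ≤ p) [Fact (1 ≤ p)]
    (F : Lp ℂ p μ → ℂ)
    (hF : ∃ L : ContinuousMultilinearMap ℂ (fun _ : Fin m => Lp ℂ p μ) ℂ,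
      (∀ (σ : Equiv.Perm (Fin m)) (v : Fin m → Lp ℂ p μ), L (v ∘ σ) = L v) ∧
      ∀ u, F u = L (fun _ => u))
    (x : Lp ℂ p μ) (hx : ‖x‖ < 1) :
    sSup ((fun y => ‖iteratedFDeriv ℂ k F x (fun _ => y)‖) '' closedBall (0 : Lp ℂ p μ) 1)
      ≤ (k.factorial : ℝ) * (1 - ‖x‖ ^ conjExp p) ^ (-(k : ℝ) / conjExp p)
          * sSup ((fun y => ‖F y‖) '' closedBall (0 : Lp ℂ p μ) 1) := by
  obtain ⟨L, -, hL⟩ := hF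
  obtain rfl : F = fun u => L fun _ => u := funext hL
  exact bernstein_homogeneous_Lp_large_p_general μ (le_trans (mod_cast hm) hmp) hmp L k hx
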